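/- Let R be a skew-invertible Hecke symmetry with parameter q such that j_q ≠ 0 for 2 ≤ j ≤ m, let M be an N×N matrix with entries in a unital associative ℂ-algebra 𝒜 satisfying the Reflection Equation R M₁ R M₁ = M₁ R M₁ R, suppose the R-skew-symmetrizer admits a rank-one factorization A^(m) = |u⟩⟨v| with ⟨v|u⟩ = 1, and assume Tr(C^{⊗m} A^(m)) = q^{−m²}. Then the quantum determinant det_R M := q^{m²} · Tr(C^{⊗m} A^(m) M_{1̄} ⋯ M_{m̄}) is given by the USUAL trace: det_R M = ⟨v| M_{1̄} ⋯ M_{m̄} |u⟩ = Tr(A^(m) M_{1̄} ⋯ M_{m̄}). -/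

import Mathlib

open Matrix BigOperators

noncomputable section

/-- An `N² × N²` complex matrix, viewed as an operator on `ℂ^N ⊗ ℂ^N`. -/
abbrev RMat (N : ℕ) := Matrix (Fin N × Fin N) (Fin N × Fin N) ℂ

/-- A matrix on the `k`-th tensor power of `ℂ^N`, with entries in `A`. -/
abbrev TMat (N k : ℕ) (A : Type _) := Matrix (Fin k → Fin N) (Fin k → Fin N) A

/-- The `q`-number `j_q = (q^j - q^{-j})/(q - q^{-1})`. -/
def qNum (q : ℂ) (j : ℕ) : ℂ := (q ^ j - q⁻¹ ^ j) / (q - q⁻¹)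

/-- Embedding of an `N²×N²` matrix `R` into the `k`-th tensor power,
acting in the (0-based) tensor factors `i` and `i+1`.  The paper's `R_i`
(1-based) is `embR k R (i-1)`. -/
def embR {N : ℕ} (k : ℕ) (R : RMat N) (i : ℕ) : TMat N k ℂ := fun f g =>
  if h : i + 1 < k then
    if ∀ j : Fin k, j.val ≠ i → j.val ≠ i + 1 → f j = g j then
      R (f ⟨i, Nat.lt_of_succ_lt h⟩, f ⟨i + 1, h⟩) (g ⟨i, Nat.lt_of_succ_lt h⟩, g ⟨i + 1, h⟩)
    else 0
  else (1 : TMat N k ℂ) f g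

/-- `X ⊗ I^{⊗(k-1)}` : the first copy `X_{1̄}` of an `N×N` matrix over `A`. -/
def emb1 {N : ℕ} (k : ℕ) {A : Type _} [Ring A] (X : Matrix (Fin N) (Fin N) A) :
    TMat N k A := fun f g =>
  if h : 0 < k then
    if ∀ j : Fin k, j.val ≠ 0 → f j = g j then X (f ⟨0, h⟩) (g ⟨0, h⟩) else 0
  else (1 : TMat N k A) f g

/-- Lift a complex matrix to a matrix over the `ℂ`-algebra `A`. -/
def liftC {N k : ℕ} (A : Type _) [Ring A] [Algebra ℂ A] (X : TMat N k ℂ) : TMat N k A :=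
  X.map (algebraMap ℂ A)

/-- The copies `X_{1̄}, X_{2̄}, …` of `X` in the `k`-th tensor power:
`copyX k R Rinv X i` is the paper's `X_{\overline{i+1}}`, i.e.
`X_{1̄} = X ⊗ I^{⊗(k-1)}` and `X_{\overline{i+1}} = R_i X_{ī} R_i⁻¹`. -/
def copyX {N : ℕ} (k : ℕ) (R Rinv : RMat N) {A : Type _} [Ring A] [Algebra ℂ A]
    (X : Matrix (Fin N) (Fin N) A) : ℕ → TMat N k A
  | 0 => emb1 k X
  | i + 1 => liftC A (embR k R i) * copyX k R Rinv X i * liftC A (embR k Rinv i)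

/-- The `R`-skew-symmetrizers, on the ambient `k`-th tensor power:
`Asym k R q j` is `A^{(j)}` (acting in the first `j` factors). -/
def Asym {N : ℕ} (k : ℕ) (R : RMat N) (q : ℂ) : ℕ → TMat N k ℂ
  | 0 => 1
  | 1 => 1
  | j + 2 =>
      (qNum q (j + 2))⁻¹ •
        (Asym k R q (j + 1) *
          ((q ^ (j + 1)) • (1 : TMat N k ℂ) - (qNum q (j + 1)) • embR k R j) *
          Asym k R q (j + 1))

/-- The `R`-symmetrizers, on the ambient `k`-th tensor power:
`Ssym k R q j` is `S^{(j)}` (acting in the first `j` factors). -/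
def Ssym {N : ℕ} (k : ℕ) (R : RMat N) (q : ℂ) : ℕ → TMat N k ℂ
  | 0 => 1
  | 1 => 1
  | j + 2 =>
      (qNum q (j + 2))⁻¹ •
        (Ssym k R q (j + 1) *
          ((q⁻¹ ^ (j + 1)) • (1 : TMat N k ℂ) + (qNum q (j + 1)) • embR k R j) *
          Ssym k R q (j + 1))

/-- The braid relation `R₁₂ R₂₃ R₁₂ = R₂₃ R₁₂ R₂₃` on `(ℂ^N)^{⊗3}`. -/
def IsBraiding {N : ℕ} (R : RMat N) : Prop :=
  embR 3 R 0 * embR 3 R 1 * embR 3 R 0 = embR 3 R 1 * embR 3 R 0 * embR 3 R 1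

/-- The Hecke condition `(q·I − R)(q⁻¹·I + R) = 0`. -/
def HeckeCond {N : ℕ} (R : RMat N) (q : ℂ) : Prop :=
  (q • (1 : RMat N) - R) * (q⁻¹ • (1 : RMat N) + R) = 0

/-- The Reflection Equation `R M₁ R M₁ = M₁ R M₁ R` (on `(ℂ^N)^{⊗2}`,
with entries in `A`). -/
def RERel {N : ℕ} (R : RMat N) {A : Type _} [Ring A] [Algebra ℂ A]
    (M : Matrix (Fin N) (Fin N) A) : Prop :=
  liftC A (embR 2 R 0) * emb1 2 M * liftC A (embR 2 R 0) * emb1 2 M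
    = emb1 2 M * liftC A (embR 2 R 0) * emb1 2 M * liftC A (embR 2 R 0)

/-- The relation `R⁻¹ D₁ R⁻¹ D₁ = D₁ R⁻¹ D₁ R⁻¹` on the matrix `D`,
where `Rinv = R⁻¹`. -/
def DDRel {N : ℕ} (Rinv : RMat N) {A : Type _} [Ring A] [Algebra ℂ A]
    (D : Matrix (Fin N) (Fin N) A) : Prop :=
  liftC A (embR 2 Rinv 0) * emb1 2 D * liftC A (embR 2 Rinv 0) * emb1 2 D
    = emb1 2 D * liftC A (embR 2 Rinv 0) * emb1 2 D * liftC A (embR 2 Rinv 0)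

/-- The permutation relations `D₁ R M₁ = R M₁ R⁻¹ D₁ R⁻¹ + I`, where `Rinv = R⁻¹`. -/
def PermRel {N : ℕ} (R Rinv : RMat N) {A : Type _} [Ring A] [Algebra ℂ A]
    (M D : Matrix (Fin N) (Fin N) A) : Prop :=
  emb1 2 D * liftC A (embR 2 R 0) * emb1 2 M
    = liftC A (embR 2 R 0) * emb1 2 M * liftC A (embR 2 Rinv 0) * emb1 2 D *
        liftC A (embR 2 Rinv 0) + 1

/-- `Ψ` is the skew-inverse of `R`:  `Σ_{j,b} R^{ij}_{ab} Ψ^{bc}_{jd} = δ^i_d δ^c_a`. -/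
def SkewInv {N : ℕ} (R Ψ : RMat N) : Prop :=
  ∀ i a c d : Fin N,
    (∑ j : Fin N, ∑ b : Fin N, R (i, j) (a, b) * Ψ (b, c) (j, d))
      = if i = d ∧ c = a then 1 else 0

/-- The matrix `C`, `C^c_d = Σ_i Ψ^{ic}_{id}`. -/
def Cmat {N : ℕ} (Ψ : RMat N) : Matrix (Fin N) (Fin N) ℂ :=
  fun c d => ∑ i : Fin N, Ψ (i, c) (i, d)

/-- The `R`-trace over all `k` tensor factors: `⟨X⟩_{1…k} = Tr(C^{⊗k} X)`. -/
def rTr {N k : ℕ} {A : Type _} [Ring A] [Algebra ℂ A] (C : Matrix (Fin N) (Fin N) ℂ)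
    (X : TMat N k A) : A :=
  ∑ f : Fin k → Fin N, ∑ g : Fin k → Fin N, (∏ j : Fin k, C (f j) (g j)) • X g f

/-- The chain `X_{1̄} X_{2̄} ⋯ X_{n̄}`. -/
def upChain {N : ℕ} (k : ℕ) (R Rinv : RMat N) {A : Type _} [Ring A] [Algebra ℂ A]
    (X : Matrix (Fin N) (Fin N) A) (n : ℕ) : TMat N k A :=
  ((List.range n).map (copyX k R Rinv X)).prod

/-- The reversed chain `X_{n̄} X_{\overline{n-1}} ⋯ X_{1̄}`. -/
def downChain {N : ℕ} (k : ℕ) (R Rinv : RMat N) {A : Type _} [Ring A] [Algebra ℂ A]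
    (X : Matrix (Fin N) (Fin N) A) (n : ℕ) : TMat N k A :=
  ((List.range n).reverse.map (copyX k R Rinv X)).prod

/-- The Capelli chain `L_{1̄}(L_{2̄} + q·1_q I)(L_{3̄} + q²·2_q I) ⋯ (L_{n̄} + q^{n-1}·(n-1)_q I)`
(note `0_q = 0`). -/
def capChainA {N : ℕ} (k : ℕ) (R Rinv : RMat N) (q : ℂ) {A : Type _} [Ring A] [Algebra ℂ A]
    (L : Matrix (Fin N) (Fin N) A) (n : ℕ) : TMat N k A :=
  ((List.range n).map
    (fun i => copyX k R Rinv L i + ((q ^ i) * qNum q i) • (1 : TMat N k A))).prod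

/-- The symmetric Capelli chain
`L_{1̄}(L_{2̄} - q⁻¹·1_q I) ⋯ (L_{n̄} - q^{-(n-1)}·(n-1)_q I)`. -/
def capChainS {N : ℕ} (k : ℕ) (R Rinv : RMat N) (q : ℂ) {A : Type _} [Ring A] [Algebra ℂ A]
    (L : Matrix (Fin N) (Fin N) A) (n : ℕ) : TMat N k A :=
  ((List.range n).map
    (fun i => copyX k R Rinv L i - ((q⁻¹ ^ i) * qNum q i) • (1 : TMat N k A))).prod

/-- The descending chain `R_{a→b} = R_a R_{a-1} ⋯ R_b` (1-based indices;
identity when `b > a`). -/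
def rChainDesc {N : ℕ} (k : ℕ) (R : RMat N) (a b : ℕ) : TMat N k ℂ :=
  ((List.range' b (a + 1 - b)).reverse.map (fun j => embR k R (j - 1))).prod

/-- The ascending chain `R_{b→a} = R_b R_{b+1} ⋯ R_a` (1-based indices;
identity when `b > a`). -/
def rChainAsc {N : ℕ} (k : ℕ) (R : RMat N) (b a : ℕ) : TMat N k ℂ :=
  ((List.range' b (a + 1 - b)).map (fun j => embR k R (j - 1))).prod


section Abstract
variable {B : Type*} [Monoid B]

/-- Abstract copies. -/
def absCopy (r : ℕ → Bˣ) (x : B) : ℕ → B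
  | 0 => x
  | i + 1 => (r i : B) * absCopy r x i * ((r i)⁻¹ : Bˣ)

theorem abs_step (R S : Bˣ) (Y : B) (hb : S * R * S = R * S * R) (hc : Commute (R : B) Y)
    (hre : (S : B) * Y * S * Y = Y * S * Y * S) :
    (R : B) * (S * Y * (S⁻¹ : Bˣ)) * R * (S * Y * (S⁻¹ : Bˣ))
      = (S * Y * (S⁻¹ : Bˣ)) * R * (S * Y * (S⁻¹ : Bˣ)) * R := by
  have h1 : S⁻¹ * R * S = R * S * R⁻¹ := by
    rw [eq_mul_inv_iff_mul_eq, mul_assoc, mul_assoc, inv_mul_eq_iff_eq_mul, ← mul_assoc, ← hb]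
    simp only [mul_assoc]
  have h2 : S * R⁻¹ * S⁻¹ = R⁻¹ * S⁻¹ * R := by
    have h3 := congrArg (fun z => R⁻¹ * S⁻¹ * z * R⁻¹ * S⁻¹) hb
    simp only [mul_assoc, inv_mul_cancel_left, mul_inv_cancel_left] at h3 ⊢
    simpa using h3
  have h1' : ((S⁻¹ : Bˣ) : B) * R * S = R * S * (R⁻¹ : Bˣ) := by exact_mod_cast congrArg Units.val h1
  have h2' : (S : B) * (R⁻¹ : Bˣ) * (S⁻¹ : Bˣ) = (R⁻¹ : Bˣ) * (S⁻¹ : Bˣ) * R := by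
    exact_mod_cast congrArg Units.val h2
  have hb' : (S : B) * R * S = R * S * R := by exact_mod_cast congrArg Units.val hb
  have hc' : ((R⁻¹ : Bˣ) : B) * Y = Y * (R⁻¹ : Bˣ) := hc.units_inv_left
  generalize ((S⁻¹ : Bˣ) : B) = s at *
  generalize ((R⁻¹ : Bˣ) : B) = t at *
  have hc : (R : B) * Y = Y * R := hc
  generalize (S : B) = S at *
  generalize (R : B) = R at *
  calc R * (S * Y * s) * R * (S * Y * s) = R * S * Y * (s * R * S) * Y * s := by
        simp only [mul_assoc]
    _ = R * S * (Y * R) * S * (t * Y) * s := by rw [h1']; simp only [mul_assoc]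
    _ = (R * S * R) * Y * S * Y * t * s := by rw [hc', ← hc]; simp only [mul_assoc]
    _ = S * R * (S * Y * S * Y) * t * s := by rw [← hb']; simp only [mul_assoc]
    _ = S * (R * Y) * S * Y * (S * t * s) := by rw [hre]; simp only [mul_assoc]
    _ = S * Y * R * S * (Y * t) * s * R := by rw [hc, h2']; simp only [mul_assoc]
    _ = S * Y * (R * S * t) * Y * s * R := by rw [← hc']; simp only [mul_assoc]
    _ = (S * Y * s) * R * (S * Y * s) * R := by rw [← h1']; simp only [mul_assoc]

variable (k : ℕ) (r : ℕ → Bˣ) (x : B)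

theorem abs_low
    (hfar : ∀ i j, i + 2 ≤ j → j + 1 < k → Commute (r i : B) (r j : B))
    (hx : ∀ i, 1 ≤ i → i + 1 < k → Commute (r i : B) x)
    (j : ℕ) : ∀ i, j + 1 ≤ i → i + 1 < k → Commute (r i : B) (absCopy r x j) := by
  induction j with
  | zero => intro i hi hk; exact hx i hi hk
  | succ j ih =>
    intro i hi hk
    have h := (hfar j i hi hk).symm
    exact (h.mul_right (ih i (by omega) hk)).mul_right h.units_inv_right

theorem abs_RE
    (hbr : ∀ i, i + 2 < k → r i * r (i+1) * r i = r (i+1) * r i * r (i+1))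
    (hfar : ∀ i j, i + 2 ≤ j → j + 1 < k → Commute (r i : B) (r j : B))
    (hx : ∀ i, 1 ≤ i → i + 1 < k → Commute (r i : B) x)
    (hRE : 1 < k → (r 0 : B) * x * r 0 * x = x * r 0 * x * r 0)
    (i : ℕ) (hi : i + 1 < k) :
    (r i : B) * absCopy r x i * r i * absCopy r x i
      = absCopy r x i * r i * absCopy r x i * r i := by
  induction i with
  | zero => exact hRE hi
  | succ i ih =>
    exact abs_step (r (i+1)) (r i) (absCopy r x i) (hbr i hi)
      (abs_low k r x hfar hx i (i+1) le_rfl hi) (ih (by omega))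

theorem abs_mid
    (hbr : ∀ i, i + 2 < k → r i * r (i+1) * r i = r (i+1) * r i * r (i+1))
    (hfar : ∀ i j, i + 2 ≤ j → j + 1 < k → Commute (r i : B) (r j : B))
    (hx : ∀ i, 1 ≤ i → i + 1 < k → Commute (r i : B) x)
    (hRE : 1 < k → (r 0 : B) * x * r 0 * x = x * r 0 * x * r 0)
    (i : ℕ) (hi : i + 1 < k) :
    Commute (r i : B) (absCopy r x i * absCopy r x (i+1)) := by
  have h := abs_RE k r x hbr hfar hx hRE i hi
  show _ * _ = _ * _
  simp only [absCopy]
  have h' := congrArg (· * ((r i)⁻¹ : Bˣ).val) h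
  simp only [mul_assoc, Units.mul_inv, mul_one, Units.inv_mul] at h' ⊢
  exact h'

theorem abs_high
    (hbr : ∀ i, i + 2 < k → r i * r (i+1) * r i = r (i+1) * r i * r (i+1))
    (hfar : ∀ i j, i + 2 ≤ j → j + 1 < k → Commute (r i : B) (r j : B))
    (hx : ∀ i, 1 ≤ i → i + 1 < k → Commute (r i : B) x)
    (hRE : 1 < k → (r 0 : B) * x * r 0 * x = x * r 0 * x * r 0)
    (i j : ℕ) (hj : i + 2 ≤ j) (hk : j < k) :
    Commute (r i : B) (absCopy r x j) := by
  induction j, hj using Nat.le_induction with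
  | base =>
    have hc : (r (i+1) : B) * absCopy r x i = absCopy r x i * r (i+1) :=
      abs_low k r x hfar hx i (i+1) le_rfl hk
    have hb := hbr i hk
    have hb' : (r i : B) * r (i+1) * r i = r (i+1) * r i * r (i+1) := by
      exact_mod_cast congrArg Units.val hb
    have h2 : r (i+1) * (r i)⁻¹ * (r (i+1))⁻¹ = (r i)⁻¹ * (r (i+1))⁻¹ * r i := by
      have h3 := congrArg (fun z => (r i)⁻¹ * (r (i+1))⁻¹ * z * (r i)⁻¹ * (r (i+1))⁻¹) hb
      simp only [mul_assoc, inv_mul_cancel_left, mul_inv_cancel_left] at h3 ⊢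
      simpa using h3.symm
    have h2' : (r (i+1) : B) * ((r i)⁻¹ : Bˣ) * ((r (i+1))⁻¹ : Bˣ)
        = ((r i)⁻¹ : Bˣ) * ((r (i+1))⁻¹ : Bˣ) * r i := by
      exact_mod_cast congrArg Units.val h2
    show _ * _ = _ * _
    simp only [absCopy]
    calc _ = ((r i : B) * r (i+1) * r i) * absCopy r x i * ((r i)⁻¹ : Bˣ) * ((r (i+1))⁻¹ : Bˣ) := by
          simp only [mul_assoc]
      _ = (r (i+1) : B) * r i * (r (i+1) * absCopy r x i) * ((r i)⁻¹ : Bˣ) * ((r (i+1))⁻¹ : Bˣ) := by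
          rw [hb']; simp only [mul_assoc]
      _ = (r (i+1) : B) * r i * absCopy r x i * (r (i+1) * ((r i)⁻¹ : Bˣ) * ((r (i+1))⁻¹ : Bˣ)) := by
          rw [hc]; simp only [mul_assoc]
      _ = _ := by rw [h2']; simp only [mul_assoc]
  | succ j hj ih =>
    have h := hfar i j hj hk
    exact (h.mul_right (ih (by omega))).mul_right h.units_inv_right

theorem abs_chain
    (hbr : ∀ i, i + 2 < k → r i * r (i+1) * r i = r (i+1) * r i * r (i+1))
    (hfar : ∀ i j, i + 2 ≤ j → j + 1 < k → Commute (r i : B) (r j : B))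
    (hx : ∀ i, 1 ≤ i → i + 1 < k → Commute (r i : B) x)
    (hRE : 1 < k → (r 0 : B) * x * r 0 * x = x * r 0 * x * r 0)
    (i : ℕ) (hi : i + 1 < k) (n : ℕ) (hn : n ≤ k) (hne : n ≠ i + 1) :
    Commute (r i : B) ((List.range n).map (absCopy r x)).prod := by
  induction n using Nat.strong_induction_on with
  | _ n ih =>
    match n with
    | 0 => simp
    | n + 1 =>
      by_cases h : n = i + 1
      · subst h
        rw [List.range_succ, List.range_succ]
        simp only [List.map_append, List.prod_append, List.map_cons, List.map_nil, List.prod_cons,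
          List.prod_nil, mul_one, mul_assoc]
        exact (ih i (by omega) (by omega) (by omega)).mul_right
          (abs_mid k r x hbr hfar hx hRE i hi)
      · rw [List.range_succ]
        simp only [List.map_append, List.prod_append, List.map_cons, List.map_nil, List.prod_cons,
          List.prod_nil, mul_one]
        refine (ih n (by omega) (by omega) h).mul_right ?_
        rcases Nat.lt_or_ge n i with h' | h'
        · exact abs_low k r x hfar hx n i h' hi
        · exact abs_high k r x hbr hfar hx hRE i n (by omega) (by omega)

end Abstract

section Emb
variable {N p k : ℕ} {A : Type*} [Ring A]

open Classical in
/-- Embedding of an operator on the factors in the range of `w`. -/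
def embW (w : Fin p → Fin k) (X : TMat N p A) : TMat N k A := fun f g =>
  if ∀ j, (¬ ∃ a, w a = j) → f j = g j then X (f ∘ w) (g ∘ w) else 0

theorem embW_mul (w : Fin p → Fin k) (hw : Function.Injective w) (X Y : TMat N p A) :
    embW w (X * Y) = embW w X * embW w Y := by
  classical
  ext f g
  rw [Matrix.mul_apply]
  by_cases hfg : ∀ j, (¬ ∃ a, w a = j) → f j = g j
  · rw [embW, if_pos hfg, Matrix.mul_apply]
    refine Finset.sum_of_injOn (fun h => Function.extend w h f) ?_ ?_ ?_ ?_
    · intro a _ b _ hab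
      funext c
      have := congrFun hab (w c)
      simpa [hw.extend_apply] using this
    · intro _ _; simp
    · intro h _ hh
      by_cases h1 : ∀ j, (¬ ∃ a, w a = j) → f j = h j
      · exfalso
        apply hh
        refine ⟨h ∘ w, by simp, ?_⟩
        funext j
        by_cases hj : ∃ a, w a = j
        · obtain ⟨a, rfl⟩ := hj
          simp [hw.extend_apply]
        · simp [Function.extend_apply' _ _ _ hj, h1 j hj]
      · simp only [embW]
        rw [if_neg h1, zero_mul]
    · intro h _
      have e1 : ∀ j, (¬ ∃ a, w a = j) → f j = Function.extend w h f j := by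
        intro j hj; rw [Function.extend_apply' _ _ _ hj]
      have e2 : ∀ j, (¬ ∃ a, w a = j) → Function.extend w h f j = g j := by
        intro j hj; rw [Function.extend_apply' _ _ _ hj, hfg j hj]
      have e3 : Function.extend w h f ∘ w = h := by funext a; simp [hw.extend_apply]
      simp only [embW]
      rw [if_pos e1, if_pos e2, e3]
  · rw [embW, if_neg hfg]
    symm
    apply Finset.sum_eq_zero
    intro h _
    simp only [embW]
    by_cases h1 : ∀ j, (¬ ∃ a, w a = j) → f j = h j
    · rw [if_neg (c := ∀ j, (¬ ∃ a, w a = j) → h j = g j), mul_zero]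
      intro h2
      exact hfg fun j hj => (h1 j hj).trans (h2 j hj)
    · rw [if_neg h1, zero_mul]

open Classical in
theorem embW_mul_apply {p' : ℕ} (w : Fin p → Fin k) (w' : Fin p' → Fin k)
    (hd : ∀ a b, w a ≠ w' b) (X : TMat N p A) (Y : TMat N p' A) (f g : Fin k → Fin N) :
    (embW w X * embW w' Y) f g =
      if ∀ j, (¬ ∃ a, w a = j) → (¬ ∃ a, w' a = j) → f j = g j then
        X (f ∘ w) (g ∘ w) * Y (f ∘ w') (g ∘ w') else 0 := by
  rw [Matrix.mul_apply, Finset.sum_eq_single (fun j => if ∃ a, w a = j then g j else f j)]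
  · simp only [embW]
    have e1 : ∀ j, (¬ ∃ a, w a = j) → f j = if ∃ a, w a = j then g j else f j := by
      intro j hj; rw [if_neg hj]
    have e2 : (fun j => if ∃ a, w a = j then g j else f j) ∘ w = g ∘ w := by
      funext a; simp
    have e3 : (fun j => if ∃ a, w a = j then g j else f j) ∘ w' = f ∘ w' := by
      funext b; simp [hd]
    rw [if_pos e1, e2, e3, mul_ite, mul_zero]
    apply if_congr _ rfl rfl
    constructor
    · intro h j h1 h2
      have := h j h2
      rwa [if_neg h1] at this
    · intro h j h2
      by_cases h1 : ∃ a, w a = j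
      · rw [if_pos h1]
      · rw [if_neg h1]; exact h j h1 h2
  · intro h _ hne
    simp only [embW]
    by_cases h1 : ∀ j, (¬ ∃ a, w a = j) → f j = h j
    · rw [if_neg (c := ∀ j, (¬ ∃ a, w' a = j) → h j = g j), mul_zero]
      intro h2
      apply hne
      funext j
      by_cases hj : ∃ a, w a = j
      · rw [if_pos hj]
        apply h2
        rintro ⟨b, hb⟩
        obtain ⟨a, ha⟩ := hj
        exact hd a b (ha.trans hb.symm)
      · rw [if_neg hj, h1 j hj]
    · rw [if_neg h1, zero_mul]
  · simp

theorem embW_commute {p' : ℕ} (w : Fin p → Fin k) (w' : Fin p' → Fin k)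
    (hd : ∀ a b, w a ≠ w' b) (X : TMat N p A) (Y : TMat N p' A)
    (hXY : ∀ a b c d, X a b * Y c d = Y c d * X a b) :
    Commute (embW w X) (embW w' Y) := by
  ext f g
  rw [embW_mul_apply w w' hd, embW_mul_apply w' w (fun a b => (hd b a).symm), hXY]
  apply if_congr _ rfl rfl
  exact ⟨fun h j h1 h2 => h j h2 h1, fun h j h1 h2 => h j h2 h1⟩

/-- Window. -/
def win (p k i : ℕ) (h : i + p ≤ k) : Fin p → Fin k := fun a => ⟨a.val + i, by omega⟩

theorem win_inj (p k i : ℕ) (h : i + p ≤ k) : Function.Injective (win p k i h) := by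
  intro a b hab
  simp only [win, Fin.mk.injEq] at hab
  ext; omega

theorem win_range (i : ℕ) (h : i + p ≤ k) (j : Fin k) :
    (∃ a, win p k i h a = j) ↔ i ≤ j.val ∧ j.val < i + p := by
  constructor
  · rintro ⟨a, rfl⟩; simp [win]; omega
  · rintro ⟨h1, h2⟩
    exact ⟨⟨j.val - i, by omega⟩, by ext; simp [win]; omega⟩

theorem embW_embR (R : RMat N) (i a : ℕ) (h : i + p ≤ k) (ha : a + 1 < p) :
    embW (win p k i h) (embR p R a) = embR k R (a + i) := by
  ext f g
  have hk : a + i + 1 < k := by omega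
  simp only [embW, embR, dif_pos ha, dif_pos hk]
  rw [← ite_and]
  have e : (⟨a + 1 + i, by omega⟩ : Fin k) = ⟨a + i + 1, hk⟩ := by ext; simp; omega
  simp only [Function.comp, win, e]
  apply if_congr _ rfl rfl
  constructor
  · rintro ⟨h1, h2⟩ j hj1 hj2
    by_cases hj : ∃ a, win p k i h a = j
    · obtain ⟨b, rfl⟩ := hj
      exact h2 b (by simp [win] at hj1; omega) (by simp [win] at hj2; omega)
    · exact h1 j hj
  · intro h1
    refine ⟨fun j hj => h1 j ?_ ?_, fun b hb1 hb2 => h1 _ ?_ ?_⟩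
    · intro hh; exact hj ((win_range i h j).2 (by omega))
    · intro hh; exact hj ((win_range i h j).2 (by omega))
    · simp; omega
    · simp; omega

theorem embW_emb1 (M : Matrix (Fin N) (Fin N) A) (h : 0 + p ≤ k) (hp : 0 < p) :
    embW (win p k 0 h) (emb1 p M) = emb1 k M := by
  ext f g
  have hk : 0 < k := by omega
  simp only [embW, emb1, dif_pos hp, dif_pos hk]
  rw [← ite_and]
  simp only [Function.comp, win, add_zero]
  apply if_congr _ rfl rfl
  constructor
  · rintro ⟨h1, h2⟩ j hj1
    by_cases hj : ∃ a, win p k 0 h a = j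
    · obtain ⟨b, rfl⟩ := hj
      exact h2 b (by simpa [win] using hj1)
    · exact h1 j hj
  · intro h1
    refine ⟨fun j hj => h1 j ?_, fun b hb1 => h1 _ ?_⟩
    · intro hh; exact hj ((win_range 0 h j).2 (by omega))
    · exact hb1

variable [Algebra ℂ A]

theorem liftC_mul (X Y : TMat N k ℂ) : liftC A (X * Y) = liftC A X * liftC A Y :=
  Matrix.map_mul

theorem liftC_one : liftC A (1 : TMat N k ℂ) = 1 := by
  simp [liftC]

theorem embW_liftC (w : Fin p → Fin k) (X : TMat N p ℂ) :
    embW w (liftC A X) = liftC A (embW w X) := by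
  ext f g
  simp only [liftC, embW, Matrix.map_apply]
  split_ifs <;> simp

theorem embR_two (R : RMat N) :
    embR 2 R 0 = R.submatrix (finTwoArrowEquiv (Fin N)) (finTwoArrowEquiv (Fin N)) := by
  ext f g
  simp only [embR, Matrix.submatrix_apply, finTwoArrowEquiv]
  rw [dif_pos (by norm_num), if_pos]
  · rfl
  · intro j h1 h2; omega

theorem embR_inv (R S : RMat N) (h : R * S = 1) (i : ℕ) : embR k R i * embR k S i = 1 := by
  by_cases hk : i + 1 < k
  · have h2 : embR 2 R 0 * embR 2 S 0 = 1 := by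
      rw [embR_two, embR_two, Matrix.submatrix_mul_equiv, h, Matrix.submatrix_one_equiv]
    have e1 := embW_embR (k := k) R i 0 (by omega : i + 2 ≤ k) (by omega)
    have e2 := embW_embR (k := k) S i 0 (by omega : i + 2 ≤ k) (by omega)
    rw [zero_add] at e1 e2
    rw [← e1, ← e2, ← embW_mul _ (win_inj _ _ _ _), h2]
    classical
    ext f g
    simp only [embW, Matrix.one_apply]
    rw [← ite_and]
    apply if_congr _ rfl rfl
    constructor
    · rintro ⟨h1, h2⟩
      funext j
      by_cases hj : ∃ a, win 2 k i (by omega) a = j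
      · obtain ⟨b, rfl⟩ := hj
        exact congrFun h2 b
      · exact h1 j hj
    · rintro rfl; simp
  · have : ∀ R : RMat N, embR k R i = 1 := by
      intro R; ext f g; simp [embR, hk]
    rw [this, this, one_mul]

/-- The unit given by `R_i`. -/
def rUnit (A : Type*) [Ring A] [Algebra ℂ A] (k : ℕ) (R S : RMat N) (h : R * S = 1)
    (h' : S * R = 1) (i : ℕ) : (TMat N k A)ˣ where
  val := liftC A (embR k R i)
  inv := liftC A (embR k S i)
  val_inv := by rw [← liftC_mul, embR_inv R S h, liftC_one]
  inv_val := by rw [← liftC_mul, embR_inv S R h', liftC_one]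

theorem copy_eq (R S : RMat N) (h : R * S = 1) (h' : S * R = 1) (M : Matrix (Fin N) (Fin N) A)
    (i : ℕ) : copyX k R S M i = absCopy (rUnit A k R S h h') (emb1 k M) i := by
  induction i with
  | zero => rfl
  | succ i ih => rw [copyX, ih]; rfl

theorem embR_chain (R S : RMat N) (h : R * S = 1) (h' : S * R = 1) (hbr : IsBraiding R)
    (M : Matrix (Fin N) (Fin N) A) (hRE : RERel R M) (i : ℕ) :
    Commute (liftC A (embR k R i)) (upChain k R S M k) := by
  by_cases hk : i + 1 < k
  swap
  · have : embR k R i = 1 := by ext f g; simp [embR, hk]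
    rw [this, liftC_one]; exact Commute.one_left _
  have e0 : copyX k R S M = absCopy (rUnit A k R S h h') (emb1 k M) :=
    funext (copy_eq R S h h' M)
  rw [upChain, e0]
  have e2 : ∀ i, i + 2 ≤ k → ∃ hh, embR k R i = embW (win 2 k i hh) (embR 2 R 0) := by
    intro i hi
    refine ⟨hi, ?_⟩
    rw [embW_embR R i 0 hi (by omega), zero_add]
  refine abs_chain k (rUnit A k R S h h') (emb1 k M) ?_ ?_ ?_ ?_ i hk k le_rfl (by omega)
  · intro i hi
    ext1
    show liftC A _ * liftC A _ * liftC A _ = liftC A _ * liftC A _ * liftC A _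
    simp only [← liftC_mul]
    congr 1
    have a0 := embW_embR (k := k) R i 0 (by omega : i + 3 ≤ k) (by omega)
    have a1 := embW_embR (k := k) R i 1 (by omega : i + 3 ≤ k) (by omega)
    rw [zero_add] at a0
    rw [add_comm 1 i] at a1
    have hb : embR 3 R 0 * embR 3 R 1 * embR 3 R 0 = embR 3 R 1 * embR 3 R 0 * embR 3 R 1 := hbr
    rw [← a0, ← a1]
    simp only [← embW_mul _ (win_inj _ _ _ _), hb]
  · intro i j hij hj
    obtain ⟨h1, e1⟩ := e2 i (by omega)
    obtain ⟨h2, e2⟩ := e2 j (by omega)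
    show Commute (liftC A (embR k R i)) (liftC A (embR k R j))
    rw [e1, e2, ← embW_liftC, ← embW_liftC]
    apply embW_commute
    · intro a b hab
      simp only [win, Fin.mk.injEq] at hab
      omega
    · intro a b c d
      exact Algebra.commutes _ _
  · intro i hi hk
    obtain ⟨h1, e1⟩ := e2 i (by omega)
    show Commute (liftC A (embR k R i)) _
    rw [e1, ← embW_liftC, ← embW_emb1 (p := 1) M (by omega) (by omega)]
    apply embW_commute
    · intro a b hab
      simp only [win, Fin.mk.injEq] at hab
      omega
    · intro a b c d
      exact Algebra.commutes _ _
  · intro hk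
    obtain ⟨h1, e1⟩ := e2 0 (by omega)
    show liftC A (embR k R 0) * _ * liftC A (embR k R 0) * _
      = _ * liftC A (embR k R 0) * _ * liftC A (embR k R 0)
    rw [e1, ← embW_liftC, ← embW_emb1 (p := 2) M h1 (by omega)]
    simp only [← embW_mul _ (win_inj _ _ _ _)]
    rw [hRE]

theorem liftC_smul (c : ℂ) (X : TMat N k ℂ) : liftC A (c • X) = c • liftC A X := by
  ext f g; simp [liftC, Algebra.smul_def (A := A)]

theorem liftC_sub (X Y : TMat N k ℂ) : liftC A (X - Y) = liftC A X - liftC A Y := by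
  ext f g; simp [liftC]

theorem asym_comm (R : RMat N) (q : ℂ) (Z : TMat N k A)
    (hZ : ∀ i, Commute (liftC A (embR k R i)) Z) (j : ℕ) :
    Commute (liftC A (Asym k R q j)) Z := by
  induction j with
  | zero => rw [Asym, liftC_one]; exact Commute.one_left _
  | succ j ih =>
    cases j with
    | zero => rw [Asym, liftC_one]; exact Commute.one_left _
    | succ j =>
      rw [Asym, liftC_smul, liftC_mul, liftC_mul, liftC_sub, liftC_smul, liftC_smul, liftC_one]
      exact ((ih.mul_left (((Commute.one_left _).smul_left _).sub_left
        ((hZ j).smul_left _))).mul_left ih).smul_left _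

end Emb

/-- under `A^(m) = |u⟩⟨v|`, `⟨v|u⟩ = 1` and
`Tr(C^{⊗m} A^(m)) = q^{−m²}`, the quantum determinant
`det_R M = q^{m²}·Tr(C^{⊗m} A^(m) M_{1̄}⋯M_{m̄})` is given by the usual trace:
`det_R M = ⟨v|M_{1̄}⋯M_{m̄}|u⟩ = Tr(A^(m) M_{1̄}⋯M_{m̄})`. -/
theorem statement16 {N m : ℕ} (R Rinv Ψ : RMat N) (q : ℂ)
    (hq0 : q ≠ 0) (hq1 : q ≠ 1) (hqm1 : q ≠ -1)
    (hinv : R * Rinv = 1) (hinv' : Rinv * R = 1)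
    (hbr : IsBraiding R) (hH : HeckeCond R q) (hΨ : SkewInv R Ψ)
    (hqm : ∀ j : ℕ, 2 ≤ j → j ≤ m → qNum q j ≠ 0)
    {A : Type _} [Ring A] [Algebra ℂ A]
    (M : Matrix (Fin N) (Fin N) A) (hRE : RERel R M)
    (u v : (Fin m → Fin N) → ℂ)
    (hA : ∀ f g : Fin m → Fin N, Asym m R q m f g = u f * v g)
    (hnorm : (∑ f : Fin m → Fin N, v f * u f) = 1)
    (htr : rTr (Cmat Ψ) (Asym m R q m) = q⁻¹ ^ (m ^ 2)) :
    (q ^ (m ^ 2)) • rTr (Cmat Ψ) (liftC A (Asym m R q m) * upChain m R Rinv M m)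
        = ∑ f : Fin m → Fin N, ∑ g : Fin m → Fin N,
            (v f * u g) • upChain m R Rinv M m f g ∧
    (q ^ (m ^ 2)) • rTr (Cmat Ψ) (liftC A (Asym m R q m) * upChain m R Rinv M m)
        = Matrix.trace (liftC A (Asym m R q m) * upChain m R Rinv M m) := by
  have hcomm := asym_comm R q (upChain m R Rinv M m)
    (embR_chain R Rinv hinv hinv' hbr M hRE) m
  have hidem : Asym m R q m * Asym m R q m = Asym m R q m := by
    ext f g
    rw [Matrix.mul_apply]
    simp only [hA]
    calc ∑ h, u f * v h * (u h * v g) = u f * (∑ h, v h * u h) * v g := by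
          rw [Finset.mul_sum, Finset.sum_mul]
          exact Finset.sum_congr rfl fun _ _ => by ring
      _ = _ := by rw [hnorm, mul_one]
  set Z := upChain m R Rinv M m with hZ
  set d : A := ∑ f : Fin m → Fin N, ∑ g : Fin m → Fin N, (v f * u g) • Z f g with hd
  have hAZ : liftC A (Asym m R q m) * Z
      = liftC A (Asym m R q m) * Z * liftC A (Asym m R q m) := by
    rw [mul_assoc, ← hcomm.eq, ← mul_assoc, ← liftC_mul, hidem]
  have hent : ∀ f g, (liftC A (Asym m R q m) * Z) f g = (u f * v g) • d := by
    intro f g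
    rw [hAZ, Matrix.mul_apply]
    simp only [Matrix.mul_apply, liftC, Matrix.map_apply, hA, ← Algebra.smul_def]
    simp only [← Algebra.commutes, ← Algebra.smul_def, hd, Finset.smul_sum, smul_smul]
    rw [Finset.sum_comm]
    exact Finset.sum_congr rfl fun _ _ => Finset.sum_congr rfl fun _ _ => by
      congr 1; ring
  have h1 : (q ^ (m ^ 2)) • rTr (Cmat Ψ) (liftC A (Asym m R q m) * Z) = d := by
    have : rTr (Cmat Ψ) (liftC A (Asym m R q m) * Z)
        = rTr (Cmat Ψ) (Asym m R q m) • d := by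
      simp only [rTr, hent, hA, Finset.sum_smul, smul_smul, smul_eq_mul]
    rw [this, htr, smul_smul, ← mul_pow, mul_inv_cancel₀ hq0, one_pow, one_smul]
  have h2 : Matrix.trace (liftC A (Asym m R q m) * Z) = d := by
    simp only [Matrix.trace, Matrix.diag, hent, ← Finset.sum_smul]
    rw [show ∑ f, u f * v f = 1 by rw [← hnorm]; exact Finset.sum_congr rfl fun _ _ => mul_comm _ _,
      one_smul]
  exact ⟨h1, h1.trans h2.symm⟩
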